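/- arXiv:1404.3854 — 2 statements merged into one kernel-verified Lean document; each statement's English description precedes it below -/
import Mathlib

section
/- Fix F ∈ ℍ_V. The map sending g to the restriction of its complexification g_ℂ to F is a group isomorphism from the stabilizer {g ∈ Sp(V,a) : g_ℂ(F) = F} onto the unitary group of the hermitian space (F, h|F×F). In particular this stabilizer is isomorphic to U(g). -/
open TensorProduct Module

noncomputable section

instance : RingHomSurjective (starRingEnd ℂ) :=
  ⟨fun z => ⟨(starRingEnd ℂ) z, by simp⟩⟩

variable {V : Type*} [AddCommGroup V] [Module ℝ V]

/-- The conjugation of `V_ℂ = ℂ ⊗[ℝ] V` induced by complex conjugation on `ℂ`. -/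
def conjC (V : Type*) [AddCommGroup V] [Module ℝ V] :
    (ℂ ⊗[ℝ] V) →ₛₗ[starRingEnd ℂ] (ℂ ⊗[ℝ] V) where
  toFun := TensorProduct.map Complex.conjAe.toLinearMap LinearMap.id
  map_add' x y := map_add _ x y
  map_smul' c x := by
    induction x using TensorProduct.induction_on with
    | zero => simp
    | tmul z v =>
        simp [TensorProduct.smul_tmul', smul_eq_mul, map_mul]
    | add x y hx hy => simp_all [smul_add]

/-- The hermitian form `h(v,w) = √-1 ⬝ a_ℂ(v, conj w)` associated to a real
symplectic form `a`. -/
def hermSymp (a : LinearMap.BilinForm ℝ V) (v w : ℂ ⊗[ℝ] V) : ℂ :=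
  Complex.I * (LinearMap.BilinForm.baseChange ℂ a) v (conjC V w)

/-- Membership in `ℍ_V`: a `g`-dimensional complex subspace of `V_ℂ` that is totally
isotropic for `a_ℂ` and on which `h` is positive definite. -/
def InHV (a : LinearMap.BilinForm ℝ V) (g : ℕ) (F : Submodule ℂ (ℂ ⊗[ℝ] V)) : Prop :=
  Module.finrank ℂ F = g ∧
  (∀ v ∈ F, ∀ w ∈ F, (LinearMap.BilinForm.baseChange ℂ a) v w = 0) ∧
  (∀ v ∈ F, v ≠ 0 → ∃ r : ℝ, 0 < r ∧ hermSymp a v v = r)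

/-!
Since `F` is isotropic and `h` is definite on it, no nonzero vector of `F` is purely imaginary, so
by dimension count the real part is an `ℝ`-linear isomorphism `F ≃ V`. It gives `V` a complex
structure for which the automorphisms of `V` with complexification stabilizing `F` are exactly the
`ℂ`-linear ones, i.e. the `ℂ`-linear automorphisms of `F`. Isotropy of `F` also gives
`a (Re x) (Re y) = Im h(x, y) / 2`, so such an automorphism preserves `a` if and only if it
preserves `h` on `F`. An orthonormal basis of `(F, h)` then identifies its unitary group with
`U(g)`.
-/

section IsometryGroup

variable (R : Type*) {M α : Type*} [Semiring R] [AddCommMonoid M] [Module R M]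

/-- The group of linear automorphisms of `M` preserving a two-variable function `H`. It is the
symplectic group when `H` is a symplectic form and the unitary group when `H` is a hermitian one;
`H` is a bare function so that forms linear in either variable are covered. -/
def isometryGroup (H : M → M → α) : Subgroup (M ≃ₗ[R] M) where
  carrier := {u | ∀ x y, H (u x) (u y) = H x y}
  one_mem' _ _ := rfl
  mul_mem' hu hv x y := (hu _ _).trans (hv x y)
  inv_mem' {u} hu x y := by
    simpa only [LinearEquiv.apply_symm_apply] using! (hu (u.symm x) (u.symm y)).symm

lemma isometryGroup_swap (H : M → M → α) :
    isometryGroup R (fun x y ↦ H y x) = isometryGroup R H :=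
  Subgroup.ext fun _ ↦ forall_comm

variable (𝕜 : Type*) {E ι : Type*} [RCLike 𝕜] [Fintype ι] [DecidableEq ι]

/-- The isometry group of an inner product, viewed as the group of linear isometric
automorphisms. -/
def isometryGroupInnerEquiv [SeminormedAddCommGroup E] [InnerProductSpace 𝕜 E] :
    isometryGroup 𝕜 (inner 𝕜 : E → E → 𝕜) ≃* (E ≃ₗᵢ[𝕜] E) where
  toFun u := u.1.isometryOfInner u.2
  invFun e := ⟨e.toLinearEquiv, e.inner_map_map⟩
  map_mul' _ _ := rfl

/-- The isometry group of an inner product, in the coordinates of an orthonormal basis. -/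
def isometryGroupInnerEquivUnitaryGroup [NormedAddCommGroup E] [InnerProductSpace 𝕜 E]
    (b : OrthonormalBasis ι 𝕜 E) :
    isometryGroup 𝕜 (inner 𝕜 : E → E → 𝕜) ≃* Matrix.unitaryGroup ι 𝕜 :=
  have : FiniteDimensional 𝕜 E := b.toBasis.finiteDimensional_of_finite
  have : CompleteSpace E := FiniteDimensional.complete 𝕜 E
  let toMatrix : (E →L[𝕜] E) ≃⋆ₐ[𝕜] Matrix ι ι 𝕜 :=
    b.repr.conjStarAlgEquiv.trans Matrix.toEuclideanCLM.symm
  (isometryGroupInnerEquiv 𝕜).trans <| Unitary.linearIsometryEquiv.symm.trans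
    (Unitary.mapEquiv (.ofClass toMatrix)).toMulEquiv

variable {𝕜} in
lemma nonempty_isometryGroup_core_mulEquiv_unitaryGroup [AddCommGroup E] [Module 𝕜 E]
    [FiniteDimensional 𝕜 E] (c : InnerProductSpace.Core 𝕜 E) :
    Nonempty (isometryGroup 𝕜 c.inner ≃* Matrix.unitaryGroup (Fin (finrank 𝕜 E)) 𝕜) := by
  let : NormedAddCommGroup E := c.toNormedAddCommGroup
  let : InnerProductSpace 𝕜 E := InnerProductSpace.ofCore c.toCore
  exact ⟨isometryGroupInnerEquivUnitaryGroup 𝕜 (stdOrthonormalBasis 𝕜 E)⟩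

end IsometryGroup

lemma baseChange_form_map_map {R A M N : Type*} [CommSemiring R] [CommSemiring A] [Algebra R A]
    [AddCommMonoid M] [Module R M] [AddCommMonoid N] [Module R N]
    {B : LinearMap.BilinForm R M} {C : LinearMap.BilinForm R N} {f : M →ₗ[R] N}
    (hf : ∀ x y, C (f x) (f y) = B x y) (x y : A ⊗[R] M) :
    C.baseChange A (f.baseChange A x) (f.baseChange A y) = B.baseChange A x y := by
  have h : (C.baseChange A).compl₁₂ (f.baseChange A) (f.baseChange A) = B.baseChange A := by
    ext x y
    simp [hf]
  exact LinearMap.congr_fun₂ h x y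

lemma neg_baseChange_form_swap {R A M : Type*} [CommRing R] [CommRing A] [Algebra R A]
    [AddCommGroup M] [Module R M] {B : LinearMap.BilinForm R M} (hB : B.IsAlt) (x y : A ⊗[R] M) :
    -B.baseChange A x y = B.baseChange A y x := by
  have h : -B.baseChange A = (B.baseChange A).flip := by
    ext x y
    simp [← LinearMap.IsAlt.neg hB x y]
  exact LinearMap.congr_fun₂ h x y

section BaseChangeStabilizer

variable {R A M : Type*} [CommSemiring R] [Semiring A] [Algebra R A] [AddCommMonoid M]
  [Module R M]

open scoped Pointwise in
/-- The group of `R`-linear automorphisms `σ` of `M` whose base change to `A` maps `F` onto itself.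
Membership of `σ` unfolds definitionally to `F.map (σ.baseChange A) = F`. -/
def baseChangeStabilizer (F : Submodule A (A ⊗[R] M)) : Subgroup (M ≃ₗ[R] M) :=
  (MulAction.stabilizer ((A ⊗[R] M) ≃ₗ[A] (A ⊗[R] M)) F).comap
    (MonoidHom.mk' (LinearEquiv.baseChange R A M M) (LinearEquiv.baseChange_mul R A M))

/-- The action of `baseChangeStabilizer F` on `F`. -/
def baseChangeRestrict (F : Submodule A (A ⊗[R] M)) :
    baseChangeStabilizer F →* (F ≃ₗ[A] F) :=
  MonoidHom.mk' (fun σ ↦ (LinearEquiv.baseChange R A M M σ.1).ofSubmodules F F σ.2) fun σ τ ↦ by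
    ext x
    exact LinearMap.congr_fun (LinearMap.baseChange_mul (A := A) σ.1.toLinearMap τ.1.toLinearMap) x

lemma coe_baseChangeRestrict (F : Submodule A (A ⊗[R] M)) (σ : baseChangeStabilizer F) (x : F) :
    (baseChangeRestrict F σ x : A ⊗[R] M) = (σ.1 : M →ₗ[R] M).baseChange A x :=
  rfl

end BaseChangeStabilizer

section RealPart

lemma conjC_tmul (z : ℂ) (v : V) : conjC V (z ⊗ₜ[ℝ] v) = (starRingEnd ℂ z) ⊗ₜ[ℝ] v :=
  rfl

lemma conjC_conjC (x : ℂ ⊗[ℝ] V) : conjC V (conjC V x) = x := by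
  induction x using TensorProduct.induction_on with
  | zero => simp
  | tmul z v => simp [conjC_tmul]
  | add x y hx hy => simp [hx, hy]

lemma baseChange_conjC {W : Type*} [AddCommGroup W] [Module ℝ W] (f : V →ₗ[ℝ] W)
    (x : ℂ ⊗[ℝ] V) : f.baseChange ℂ (conjC V x) = conjC W (f.baseChange ℂ x) := by
  induction x using TensorProduct.induction_on with
  | zero => simp
  | tmul z v => simp [conjC_tmul]
  | add x y hx hy => simp [hx, hy]

lemma baseChange_form_conjC_conjC (a : LinearMap.BilinForm ℝ V) (x y : ℂ ⊗[ℝ] V) :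
    a.baseChange ℂ (conjC V x) (conjC V y) = starRingEnd ℂ (a.baseChange ℂ x y) := by
  induction x using TensorProduct.induction_on with
  | zero => simp
  | tmul z v =>
    induction y using TensorProduct.induction_on with
    | zero => simp
    | tmul w u => simp [conjC_tmul]
    | add y y' hy hy' => simp only [map_add, hy, hy']
  | add x x' hx hx' => simp only [map_add, hx, hx', LinearMap.add_apply]

/-- The real part `ℂ ⊗[ℝ] V → V`, sending `1 ⊗ v + i ⊗ w` to `v`. -/
def reC (V : Type*) [AddCommGroup V] [Module ℝ V] : (ℂ ⊗[ℝ] V) →ₗ[ℝ] V :=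
  TensorProduct.lid ℝ V ∘ₗ Complex.reLm.rTensor V

lemma reC_tmul (z : ℂ) (v : V) : reC V (z ⊗ₜ[ℝ] v) = z.re • v := by
  simp [reC]

lemma reC_baseChange {W : Type*} [AddCommGroup W] [Module ℝ W] (f : V →ₗ[ℝ] W)
    (x : ℂ ⊗[ℝ] V) : reC W (f.baseChange ℂ x) = f (reC V x) := by
  induction x using TensorProduct.induction_on with
  | zero => simp
  | tmul z v => simp [reC_tmul]
  | add x y hx hy => simp [hx, hy]

lemma add_conjC (x : ℂ ⊗[ℝ] V) : x + conjC V x = (2 : ℂ) ⊗ₜ[ℝ] reC V x := by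
  induction x using TensorProduct.induction_on with
  | zero => simp
  | tmul z v =>
    rw [conjC_tmul, reC_tmul, ← add_tmul, ← smul_tmul, Complex.add_conj]
    simp [mul_comm]
  | add x y hx hy => rw [map_add, map_add, tmul_add, ← hx, ← hy, add_add_add_comm]

lemma one_tmul_reC_sub_I_tmul_reC (x : ℂ ⊗[ℝ] V) :
    (1 : ℂ) ⊗ₜ[ℝ] reC V x - Complex.I ⊗ₜ[ℝ] reC V (Complex.I • x) = x := by
  induction x using TensorProduct.induction_on with
  | zero => simp
  | tmul z v =>
    rw [smul_tmul', reC_tmul, reC_tmul, ← smul_tmul, ← smul_tmul, ← sub_tmul]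
    congr 1
    apply Complex.ext <;> simp
  | add x y hx hy =>
    rw [smul_add, map_add, map_add, tmul_add, tmul_add, add_sub_add_comm, hx, hy]

lemma eq_of_reC_eq {x y : ℂ ⊗[ℝ] V} (h : reC V x = reC V y)
    (hI : reC V (Complex.I • x) = reC V (Complex.I • y)) : x = y := by
  rw [← one_tmul_reC_sub_I_tmul_reC x, h, hI, one_tmul_reC_sub_I_tmul_reC]

/-- The real part restricted to a complex subspace `F` of `V_ℂ`. It is bijective exactly when
`V_ℂ` is the direct sum of `F` and its conjugate, and then transports to `V` the complex
structure of `F`. -/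
def reOn (F : Submodule ℂ (ℂ ⊗[ℝ] V)) : F →ₗ[ℝ] V :=
  reC V ∘ₗ F.subtype.restrictScalars ℝ

variable {F : Submodule ℂ (ℂ ⊗[ℝ] V)}

lemma reOn_baseChangeRestrict (σ : baseChangeStabilizer F) (x : F) :
    reOn F (baseChangeRestrict F σ x) = σ.1 (reOn F x) :=
  reC_baseChange σ.1.toLinearMap x

lemma baseChange_eq_of_semiconj_reOn {f : V →ₗ[ℝ] V} {u : F →ₗ[ℂ] F}
    (h : ∀ x, f (reOn F x) = reOn F (u x)) (x : F) : f.baseChange ℂ x = (u x : ℂ ⊗[ℝ] V) := by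
  refine eq_of_reC_eq ((reC_baseChange f x).trans (h x)) ?_
  calc reC V (Complex.I • f.baseChange ℂ x)
      = f (reOn F (Complex.I • x)) := by rw [← map_smul, reC_baseChange]; rfl
    _ = reOn F (u (Complex.I • x)) := h _
    _ = reC V (Complex.I • (u x : ℂ ⊗[ℝ] V)) := by rw [map_smul]; rfl

lemma baseChangeRestrict_injective (hF : Function.Surjective (reOn F)) :
    Function.Injective (baseChangeRestrict F) := by
  intro σ τ h
  ext v
  obtain ⟨x, rfl⟩ := hF v
  rw [← reOn_baseChangeRestrict, h, reOn_baseChangeRestrict]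

lemma baseChangeRestrict_surjective (hF : Function.Bijective (reOn F)) :
    Function.Surjective (baseChangeRestrict F) := by
  intro u
  let e : F ≃ₗ[ℝ] V := LinearEquiv.ofBijective (reOn F) hF
  let σ : V ≃ₗ[ℝ] V := e.symm ≪≫ₗ u.restrictScalars ℝ ≪≫ₗ e
  have hσ (x : F) : σ (reOn F x) = reOn F (u x) :=
    congrArg (fun y ↦ reOn F (u y)) (e.symm_apply_apply x)
  have hσu (x : F) : (σ : V →ₗ[ℝ] V).baseChange ℂ x = (u x : ℂ ⊗[ℝ] V) :=
    baseChange_eq_of_semiconj_reOn (u := u.toLinearMap) hσ x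
  have hσF : F.map ((σ : V →ₗ[ℝ] V).baseChange ℂ) = F := by
    have h : (σ : V →ₗ[ℝ] V).baseChange ℂ ∘ₗ F.subtype = F.subtype ∘ₗ u.toLinearMap :=
      LinearMap.ext hσu
    calc F.map ((σ : V →ₗ[ℝ] V).baseChange ℂ)
        = LinearMap.range ((σ : V →ₗ[ℝ] V).baseChange ℂ ∘ₗ F.subtype) := by
          rw [LinearMap.range_comp, F.range_subtype]
      _ = F := by rw [h, LinearMap.range_comp, u.range, Submodule.map_top, F.range_subtype]
  exact ⟨⟨σ, hσF⟩, LinearEquiv.ext fun x ↦ Subtype.ext (hσu x)⟩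

end RealPart

section HermitianForm

variable {a : LinearMap.BilinForm ℝ V} {F : Submodule ℂ (ℂ ⊗[ℝ] V)} {g : ℕ}

lemma conj_hermSymp (ha : a.IsAlt) (x y : ℂ ⊗[ℝ] V) :
    starRingEnd ℂ (hermSymp a x y) = hermSymp a y x := by
  rw [hermSymp, map_mul, ← baseChange_form_conjC_conjC, conjC_conjC,
    ← neg_baseChange_form_swap ha, Complex.conj_I, neg_mul_neg, hermSymp]

lemma hermSymp_baseChange {W : Type*} [AddCommGroup W] [Module ℝ W]
    {b : LinearMap.BilinForm ℝ W} {f : V →ₗ[ℝ] W} (hf : ∀ v w, b (f v) (f w) = a v w)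
    (x y : ℂ ⊗[ℝ] V) : hermSymp b (f.baseChange ℂ x) (f.baseChange ℂ y) = hermSymp a x y := by
  rw [hermSymp, ← baseChange_conjC, baseChange_form_map_map hf, hermSymp]

lemma form_reC_reC {x y : ℂ ⊗[ℝ] V} (h : a.baseChange ℂ x y = 0) :
    a (reC V x) (reC V y) = (hermSymp a x y).im / 2 := by
  have hconj : a.baseChange ℂ (conjC V x) y =
      starRingEnd ℂ (a.baseChange ℂ x (conjC V y)) := by
    rw [← baseChange_form_conjC_conjC, conjC_conjC]
  -- In `a_ℂ(x + x̄, y + ȳ)` only the two mutually conjugate cross terms survive.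
  have hexpand : ((4 * a (reC V x) (reC V y) : ℝ) : ℂ) =
      ((2 * (a.baseChange ℂ x (conjC V y)).re : ℝ) : ℂ) :=
    calc ((4 * a (reC V x) (reC V y) : ℝ) : ℂ)
        = a.baseChange ℂ (x + conjC V x) (y + conjC V y) := by
          rw [add_conjC, add_conjC, LinearMap.BilinForm.baseChange_tmul, Complex.real_smul]
          push_cast
          ring
      _ = a.baseChange ℂ x (conjC V y) + starRingEnd ℂ (a.baseChange ℂ x (conjC V y)) := by
          simp only [map_add, LinearMap.add_apply, h, baseChange_form_conjC_conjC, hconj, map_zero,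
            zero_add, add_comm]
      _ = ((2 * (a.baseChange ℂ x (conjC V y)).re : ℝ) : ℂ) := Complex.add_conj _
  have him : (hermSymp a x y).im = (a.baseChange ℂ x (conjC V y)).re := Complex.I_mul_im _
  linarith [Complex.ofReal_injective hexpand]

lemma mem_isometryGroup_iff_baseChangeRestrict (hF : ∀ v ∈ F, ∀ w ∈ F, a.baseChange ℂ v w = 0)
    (hre : Function.Surjective (reOn F)) (σ : baseChangeStabilizer F) :
    σ.1 ∈ isometryGroup ℝ (fun v w ↦ a v w) ↔
      baseChangeRestrict F σ ∈ isometryGroup ℂ (fun x y : F ↦ hermSymp a x y) := by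
  have form_reOn (x y : F) : a (reOn F x) (reOn F y) = (hermSymp a x y).im / 2 :=
    form_reC_reC (hF x x.2 y y.2)
  refine ⟨fun hσ x y ↦ hermSymp_baseChange (f := σ.1.toLinearMap) hσ x y, fun hu v w ↦ ?_⟩
  obtain ⟨x, rfl⟩ := hre v
  obtain ⟨y, rfl⟩ := hre w
  have hxy : hermSymp a (baseChangeRestrict F σ x) (baseChangeRestrict F σ y) =
      hermSymp a x y := hu x y
  simp only [← reOn_baseChangeRestrict, form_reOn, hxy]

namespace InHV

lemma reOn_injective (hF : InHV a g F) : Function.Injective (reOn F) := by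
  refine (injective_iff_map_eq_zero _).2 fun x (hx : reC V x = 0) ↦ ?_
  by_contra hne
  obtain ⟨r, hr, hrx⟩ := hF.2.2 x x.2 (Subtype.coe_ne_coe.2 hne)
  have hconj : conjC V (x : ℂ ⊗[ℝ] V) = -x :=
    (neg_eq_of_add_eq_zero_right (by rw [add_conjC, hx, tmul_zero])).symm
  have hzero : hermSymp a x x = 0 := by
    rw [hermSymp, hconj, map_neg, hF.2.1 x x.2 x x.2, neg_zero, mul_zero]
  exact hr.ne (Complex.ofReal_injective (hzero.symm.trans hrx))

lemma reOn_bijective [FiniteDimensional ℝ V] (hdim : finrank ℝ V = 2 * g) (hF : InHV a g F) :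
    Function.Bijective (reOn F) := by
  have : FiniteDimensional ℝ F := FiniteDimensional.trans ℝ ℂ F
  have hrank : finrank ℝ F = finrank ℝ V := by
    rw [← finrank_mul_finrank ℝ ℂ F, Complex.finrank_real_complex, hF.1, hdim]
  exact ⟨hF.reOn_injective,
    (LinearMap.injective_iff_surjective_of_finrank_eq_finrank hrank).1 hF.reOn_injective⟩

/-- The inner product `⟪x, y⟫ = h(y, x)` on `F`; the arguments are swapped because inner products
are conjugate-linear in the first variable. -/
abbrev innerProductCore (ha : a.IsAlt) (hF : InHV a g F) : InnerProductSpace.Core ℂ F where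
  inner x y := hermSymp a y x
  conj_inner_symm x y := conj_hermSymp ha x y
  re_inner_nonneg x := by
    by_cases hx : (x : ℂ ⊗[ℝ] V) = 0
    · simp [hermSymp, hx]
    · obtain ⟨r, hr, hrx⟩ := hF.2.2 x x.2 hx
      simpa [hrx] using hr.le
  add_left x y z := by simp [hermSymp, mul_add]
  smul_left x y c := by simp [hermSymp, mul_left_comm]
  definite x hx := by
    by_contra hne
    obtain ⟨r, hr, hrx⟩ := hF.2.2 x x.2 (Subtype.coe_ne_coe.2 hne)
    exact hr.ne (Complex.ofReal_injective (hx.symm.trans hrx))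

lemma nonempty_isometryGroup_mulEquiv_unitaryGroup [FiniteDimensional ℂ F] (ha : a.IsAlt)
    (hF : InHV a g F) :
    Nonempty (isometryGroup ℂ (fun x y : F ↦ hermSymp a x y) ≃* Matrix.unitaryGroup (Fin g) ℂ) := by
  obtain rfl := hF.1
  rw [← isometryGroup_swap]
  exact nonempty_isometryGroup_core_mulEquiv_unitaryGroup (hF.innerProductCore ha)

/-- The group isomorphism `σ ↦ σ_ℂ|F` from the stabilizer of `F` in `Sp(V, a)` onto the unitary
group of `(F, h)`. -/
def stabilizerEquiv [FiniteDimensional ℝ V] (hdim : finrank ℝ V = 2 * g) (hF : InHV a g F) :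
    ↥(isometryGroup ℝ (fun v w ↦ a v w) ⊓ baseChangeStabilizer F) ≃*
      isometryGroup ℂ (fun x y : F ↦ hermSymp a x y) :=
  have hre := hF.reOn_bijective hdim
  have mem_iff := mem_isometryGroup_iff_baseChangeRestrict hF.2.1 hre.surjective
  MulEquiv.ofBijective
    (((baseChangeRestrict F).comp (Subgroup.inclusion inf_le_right)).codRestrict _
      fun σ ↦ (mem_iff ⟨σ.1, σ.2.2⟩).1 σ.2.1)
    ⟨fun _ _ h ↦ Subgroup.inclusion_injective inf_le_right
        (baseChangeRestrict_injective hre.surjective (congrArg Subtype.val h)),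
      fun ⟨u, hu⟩ ↦ by
        obtain ⟨σ, rfl⟩ := baseChangeRestrict_surjective hre u
        exact ⟨⟨σ.1, (mem_iff σ).2 hu, σ.2⟩, rfl⟩⟩

lemma coe_stabilizerEquiv_apply [FiniteDimensional ℝ V] (hdim : finrank ℝ V = 2 * g)
    (hF : InHV a g F) (σ : ↥(isometryGroup ℝ (fun v w ↦ a v w) ⊓ baseChangeStabilizer F)) (x : F) :
    ((hF.stabilizerEquiv hdim σ).1 x : ℂ ⊗[ℝ] V) = (σ.1 : V →ₗ[ℝ] V).baseChange ℂ x :=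
  coe_baseChangeRestrict F ⟨σ.1, σ.2.2⟩ x

end InHV

end HermitianForm

/-- for `F ∈ ℍ_V`, the map sending `g` to the restriction of `g_ℂ` to `F`
is a group isomorphism from the stabilizer `{g ∈ Sp(V,a) : g_ℂ(F) = F}` onto the unitary
group of `(F, h|F×F)`; in particular this stabilizer is isomorphic to `U(g)`. -/
theorem stabilizer_iso_unitary
    [FiniteDimensional ℝ V] (g : ℕ) (hg : 1 ≤ g)
    (hdim : Module.finrank ℝ V = 2 * g)
    (a : LinearMap.BilinForm ℝ V)
    (halt : LinearMap.IsAlt a) (hnd : LinearMap.BilinForm.Nondegenerate a)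
    (F : Submodule ℂ (ℂ ⊗[ℝ] V)) (hF : InHV a g F) :
    (∃ Φ : {σ : V ≃ₗ[ℝ] V // (∀ v w : V, a (σ v) (σ w) = a v w) ∧
            Submodule.map (LinearMap.baseChange ℂ (σ : V →ₗ[ℝ] V)) F = F} →
          {u : F ≃ₗ[ℂ] F // ∀ x y : F,
            hermSymp a (u x : ℂ ⊗[ℝ] V) (u y : ℂ ⊗[ℝ] V) =
              hermSymp a (x : ℂ ⊗[ℝ] V) (y : ℂ ⊗[ℝ] V)},
      Function.Bijective Φ ∧
      (∀ σ (x : F), (((Φ σ : F ≃ₗ[ℂ] F) x : F) : ℂ ⊗[ℝ] V) =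
        LinearMap.baseChange ℂ (σ.1 : V →ₗ[ℝ] V) (x : ℂ ⊗[ℝ] V)) ∧
      (∀ σ τ ρ, ρ.1 = σ.1 * τ.1 → (Φ ρ).1 = (Φ σ).1 * (Φ τ).1)) ∧
    (∃ Ψ : {σ : V ≃ₗ[ℝ] V // (∀ v w : V, a (σ v) (σ w) = a v w) ∧
            Submodule.map (LinearMap.baseChange ℂ (σ : V →ₗ[ℝ] V)) F = F} →
          Matrix.unitaryGroup (Fin g) ℂ,
      Function.Bijective Ψ ∧
      (∀ σ τ ρ, ρ.1 = σ.1 * τ.1 → Ψ ρ = Ψ σ * Ψ τ)) := by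
  let Φ := hF.stabilizerEquiv hdim
  obtain ⟨Ψ⟩ := hF.nonempty_isometryGroup_mulEquiv_unitaryGroup halt
  have Φ_mul (σ τ ρ : ↥(isometryGroup ℝ (fun v w ↦ a v w) ⊓ baseChangeStabilizer F))
      (h : ρ.1 = σ.1 * τ.1) : Φ ρ = Φ σ * Φ τ := by
    rw [← map_mul, show ρ = σ * τ from Subtype.ext h]
  exact ⟨⟨Φ, Φ.bijective, hF.coe_stabilizerEquiv_apply hdim,
      fun σ τ ρ h ↦ congrArg Subtype.val (Φ_mul σ τ ρ h)⟩,
    ⟨Φ.trans Ψ, (Φ.trans Ψ).bijective,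
      fun σ τ ρ h ↦ (congrArg Ψ (Φ_mul σ τ ρ h)).trans (map_mul Ψ _ _)⟩⟩

end
end

section
/- Let I ⊂ V be a subspace that is totally isotropic for a, of dimension k, with a-annihilator I^⊥ := {v ∈ V : a(v, I) = 0}. Then for every F ∈ ℍ_V: (i) F ∩ I_ℂ = {0}; (ii) the quotient map V_ℂ → V_ℂ/I^⊥_ℂ maps F onto V_ℂ/I^⊥_ℂ; (iii) the quotient map V_ℂ → V_ℂ/I_ℂ maps F ∩ I^⊥_ℂ isomorphically onto a (g−k)-dimensional subspace F_I of (I^⊥/I)_ℂ that is totally isotropic for the (nondegenerate) symplectic form induced by a on I^⊥/I and on which the associated hermitian form is positive definite; that is, F_I ∈ ℍ_{I^⊥/I}. -/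
open TensorProduct Module

noncomputable section

variable {V : Type*} [AddCommGroup V] [Module ℝ V]

/-!
Positivity of `h` on `F` against `h = 0` on `I_ℂ`, which is isotropic and stable under conjugation,
gives `F ∩ I_ℂ = 0`. Since `F` is Lagrangian and `I^⊥_ℂ` is the orthogonal of `I_ℂ`, taking
orthogonals in `F ∩ I_ℂ = 0` yields `F + I^⊥_ℂ = V_ℂ`. This is (ii), and it gives
`dim (F ∩ I^⊥_ℂ) = g - k`.
-/

lemma orthogonal_sup {R M : Type*} [CommSemiring R] [AddCommMonoid M] [Module R M]
    (B : LinearMap.BilinForm R M) (P Q : Submodule R M) :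
    B.orthogonal (P ⊔ Q) = B.orthogonal P ⊓ B.orthogonal Q := by
  refine le_antisymm (le_inf (LinearMap.BilinForm.orthogonal_le le_sup_left)
    (LinearMap.BilinForm.orthogonal_le le_sup_right)) fun x ⟨hxP, hxQ⟩ y hy => ?_
  obtain ⟨p, hp, q, hq, rfl⟩ := Submodule.mem_sup.1 hy
  rw [LinearMap.BilinForm.add_left, hxP p hp, hxQ q hq, add_zero]

section FiniteDimensional

variable {K W : Type*} [Field K] [AddCommGroup W] [Module K W] [FiniteDimensional K W]
  {B : LinearMap.BilinForm K W} {P Q : Submodule K W}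

lemma orthogonal_sup_orthogonal_eq_top (hB : B.Nondegenerate) (hPQ : Disjoint P Q) :
    B.orthogonal P ⊔ B.orthogonal Q = ⊤ := by
  apply Submodule.eq_top_of_finrank_eq
  have h_sup := Submodule.finrank_sup_add_finrank_inf_eq P Q
  have h_orthogonal := Submodule.finrank_sup_add_finrank_inf_eq (B.orthogonal P) (B.orthogonal Q)
  rw [hPQ.eq_bot, finrank_bot] at h_sup
  rw [← orthogonal_sup] at h_orthogonal
  simp only [LinearMap.BilinForm.finrank_orthogonal hB] at h_orthogonal
  have := Submodule.finrank_le (P ⊔ Q)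
  omega

lemma orthogonal_eq_self_of_two_mul_finrank_eq (hB : B.Nondegenerate) (hP : P ≤ B.orthogonal P)
    (hdim : 2 * finrank K P = finrank K W) : B.orthogonal P = P := by
  refine (Submodule.eq_of_le_of_finrank_eq hP ?_).symm
  rw [LinearMap.BilinForm.finrank_orthogonal hB]
  omega

end FiniteDimensional

lemma finrank_map_mkQ_of_disjoint {R M : Type*} [Ring R] [AddCommGroup M] [Module R M]
    {N P : Submodule R M} (h : Disjoint N P) : finrank R (N.map P.mkQ) = finrank R N := by
  have h_injective : Function.Injective (P.mkQ.domRestrict N) := by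
    rw [← LinearMap.ker_eq_bot, LinearMap.ker_domRestrict, Submodule.ker_mkQ]
    exact Submodule.disjoint_iff_comap_eq_bot.1 h
  rw [← LinearMap.range_domRestrict, LinearMap.finrank_range_of_inj h_injective]

lemma finrank_submodule_baseChange {R M : Type*} (A : Type*) [CommRing R] [CommRing A]
    [Nontrivial A] [Algebra R A] [Module.Flat R A] [AddCommGroup M] [Module R M]
    (P : Submodule R M) [Module.Free R P] : finrank A (P.baseChange A) = finrank R P := by
  have : Nontrivial R := (algebraMap R A).domain_nontrivial
  exact (Submodule.toBaseChange.toLinearEquiv A P).finrank_eq.symm.trans finrank_baseChange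

lemma baseChange_le_orthogonal_baseChange {R M : Type*} (A : Type*) [CommSemiring R]
    [CommSemiring A] [Algebra R A] [AddCommMonoid M] [Module R M] {B : LinearMap.BilinForm R M}
    {P Q : Submodule R M} (h : Q ≤ B.orthogonal P) :
    Q.baseChange A ≤ (B.baseChange A).orthogonal (P.baseChange A) := by
  rw [Submodule.baseChange_eq_span, Submodule.span_le]
  rintro _ ⟨y, hy, rfl⟩
  suffices P.baseChange A ≤ LinearMap.ker ((B.baseChange A).flip (1 ⊗ₜ y)) from
    fun x hx => this hx
  rw [Submodule.baseChange_eq_span, Submodule.span_le]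
  rintro _ ⟨x, hx, rfl⟩
  have hxy : B x y = 0 := h hy x hx
  simp [hxy]

lemma nondegenerate_baseChange {R M : Type*} (A : Type*) [CommRing R] [IsDomain R] [CommRing A]
    [IsDomain A] [Algebra R A] [FaithfulSMul R A] [AddCommGroup M] [Module R M] [Module.Free R M]
    [Module.Finite R M] {B : LinearMap.BilinForm R M} (hB : B.Nondegenerate) :
    (B.baseChange A).Nondegenerate := by
  let b := Module.Free.chooseBasis R M
  have h_matrix : LinearMap.BilinForm.toMatrix (b.baseChange A) (B.baseChange A) =
      (algebraMap R A).mapMatrix (LinearMap.BilinForm.toMatrix b B) := by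
    ext i j
    simp [LinearMap.BilinForm.toMatrix_apply, Algebra.algebraMap_eq_smul_one]
  rw [LinearMap.BilinForm.nondegenerate_iff_det_ne_zero (b.baseChange A), h_matrix,
    ← RingHom.map_det]
  exact (map_ne_zero_iff _ (FaithfulSMul.algebraMap_injective R A)).2
    ((LinearMap.BilinForm.nondegenerate_iff_det_ne_zero b).1 hB)

lemma baseChange_orthogonal {K W : Type*} (L : Type*) [Field K] [Field L] [Algebra K L]
    [AddCommGroup W] [Module K W] [FiniteDimensional K W] {B : LinearMap.BilinForm K W}
    (hB : B.Nondegenerate) (P : Submodule K W) :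
    (B.orthogonal P).baseChange L = (B.baseChange L).orthogonal (P.baseChange L) := by
  apply Submodule.eq_of_le_of_finrank_eq (baseChange_le_orthogonal_baseChange L le_rfl)
  rw [LinearMap.BilinForm.finrank_orthogonal (nondegenerate_baseChange L hB), finrank_baseChange,
    finrank_submodule_baseChange, finrank_submodule_baseChange,
    LinearMap.BilinForm.finrank_orthogonal hB]

lemma conjC_mem_baseChange {P : Submodule ℝ V} {x : ℂ ⊗[ℝ] V} (hx : x ∈ P.baseChange ℂ) :
    conjC V x ∈ P.baseChange ℂ := by
  suffices P.baseChange ℂ ≤ (P.baseChange ℂ).comap (conjC V) from this hx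
  conv_lhs => rw [Submodule.baseChange_eq_span]
  rw [Submodule.span_le]
  rintro _ ⟨u, hu, rfl⟩
  have h_real : conjC V (1 ⊗ₜ u) = 1 ⊗ₜ u := by simp [conjC]
  simpa [h_real] using Submodule.tmul_mem_baseChange_of_mem (1 : ℂ) hu

lemma hermSymp_eq_zero_of_mem_baseChange {a : LinearMap.BilinForm ℝ V} {P Q : Submodule ℝ V}
    (h : Q ≤ a.orthogonal P) {v w : ℂ ⊗[ℝ] V} (hv : v ∈ P.baseChange ℂ)
    (hw : w ∈ Q.baseChange ℂ) : hermSymp a v w = 0 := by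
  have h_bilin : a.baseChange ℂ v (conjC V w) = 0 :=
    baseChange_le_orthogonal_baseChange ℂ h (conjC_mem_baseChange hw) v hv
  rw [hermSymp, h_bilin, mul_zero]

namespace InHV

variable {a : LinearMap.BilinForm ℝ V} {g : ℕ} {F : Submodule ℂ (ℂ ⊗[ℝ] V)} {I : Submodule ℝ V}

lemma disjoint_baseChange (hF : InHV a g F) (hI : I ≤ a.orthogonal I) :
    Disjoint F (I.baseChange ℂ) := by
  refine Submodule.disjoint_def.2 fun x hxF hxI => ?_
  by_contra hx
  obtain ⟨r, hr, h_herm⟩ := hF.2.2 x hxF hx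
  rw [hermSymp_eq_zero_of_mem_baseChange hI hxI hxI] at h_herm
  exact hr.ne' (Complex.ofReal_eq_zero.1 h_herm.symm)

variable [FiniteDimensional ℝ V]

lemma orthogonal_eq_self (hF : InHV a g F) (ha : a.Nondegenerate) (hdim : finrank ℝ V = 2 * g) :
    (a.baseChange ℂ).orthogonal F = F := by
  apply orthogonal_eq_self_of_two_mul_finrank_eq (nondegenerate_baseChange ℂ ha)
  · exact fun w hw v hv => hF.2.1 v hv w hw
  · rw [hF.1, finrank_baseChange, hdim]

lemma sup_baseChange_orthogonal_eq_top (hF : InHV a g F) (ha : a.Nondegenerate)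
    (hdim : finrank ℝ V = 2 * g) (hI : I ≤ a.orthogonal I) :
    F ⊔ (a.orthogonal I).baseChange ℂ = ⊤ := by
  rw [baseChange_orthogonal ℂ ha, ← hF.orthogonal_eq_self ha hdim]
  exact orthogonal_sup_orthogonal_eq_top (nondegenerate_baseChange ℂ ha)
    (hF.disjoint_baseChange hI)

lemma finrank_inf_baseChange_orthogonal (hF : InHV a g F) (ha : a.Nondegenerate)
    (hdim : finrank ℝ V = 2 * g) (hI : I ≤ a.orthogonal I) :
    finrank ℂ ↥(F ⊓ (a.orthogonal I).baseChange ℂ) = g - finrank ℝ I := by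
  have h_dim := Submodule.finrank_sup_add_finrank_inf_eq F ((a.orthogonal I).baseChange ℂ)
  rw [hF.sup_baseChange_orthogonal_eq_top ha hdim hI, finrank_top, finrank_baseChange,
    finrank_submodule_baseChange, LinearMap.BilinForm.finrank_orthogonal ha, hdim, hF.1] at h_dim
  have := hdim ▸ I.finrank_le
  omega

end InHV

/-- let `I ⊂ V` be a `k`-dimensional totally isotropic subspace with
`a`-annihilator `I^⊥`.  Then for every `F ∈ ℍ_V`: (i) `F ∩ I_ℂ = 0`; (ii) `F` maps onto
`V_ℂ/I^⊥_ℂ`; (iii) the quotient map `V_ℂ → V_ℂ/I_ℂ` maps `F ∩ I^⊥_ℂ` isomorphically onto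
a `(g-k)`-dimensional subspace `F_I` of `(I^⊥/I)_ℂ` that is totally isotropic for the
induced symplectic form and on which the induced hermitian form is positive definite,
i.e. `F_I ∈ ℍ_{I^⊥/I}` (expressed via representatives in `I^⊥_ℂ`). -/
theorem projection_of_HV_along_isotropic
    [FiniteDimensional ℝ V] (g : ℕ) (hg : 1 ≤ g)
    (hdim : Module.finrank ℝ V = 2 * g)
    (a : LinearMap.BilinForm ℝ V)
    (halt : LinearMap.IsAlt a) (hnd : LinearMap.BilinForm.Nondegenerate a)
    (k : ℕ) (I : Submodule ℝ V) (hI : Module.finrank ℝ I = k)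
    (hIiso : ∀ x ∈ I, ∀ y ∈ I, a x y = 0)
    (Iperp : Submodule ℝ V) (hIperp : ∀ v : V, v ∈ Iperp ↔ ∀ x ∈ I, a v x = 0)
    (F : Submodule ℂ (ℂ ⊗[ℝ] V)) (hF : InHV a g F) :
    -- (i)
    F ⊓ I.baseChange ℂ = ⊥ ∧
    -- (ii)
    Submodule.map (Iperp.baseChange ℂ).mkQ F = ⊤ ∧
    -- (iii) injectivity of the quotient map `V_ℂ → V_ℂ/I_ℂ` on `F ⊓ I^⊥_ℂ` ...
    (F ⊓ Iperp.baseChange ℂ) ⊓ I.baseChange ℂ = ⊥ ∧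
    -- ... the image `F_I` is `(g-k)`-dimensional and lies in `(I^⊥/I)_ℂ` ...
    Module.finrank ℂ
      ↥(Submodule.map (I.baseChange ℂ).mkQ (F ⊓ Iperp.baseChange ℂ)) = g - k ∧
    Submodule.map (I.baseChange ℂ).mkQ (F ⊓ Iperp.baseChange ℂ) ≤
      Submodule.map (I.baseChange ℂ).mkQ (Iperp.baseChange ℂ) ∧
    -- ... and, in terms of representatives in `I^⊥_ℂ`, it is totally isotropic for the
    -- induced symplectic form and positive definite for the induced hermitian form:
    (∀ v ∈ F ⊓ Iperp.baseChange ℂ, ∀ w ∈ F ⊓ Iperp.baseChange ℂ,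
      (LinearMap.BilinForm.baseChange ℂ a) v w = 0) ∧
    (∀ v ∈ F ⊓ Iperp.baseChange ℂ, v ∉ I.baseChange ℂ →
      ∃ r : ℝ, 0 < r ∧ hermSymp a v v = r) := by
  obtain rfl : Iperp = a.orthogonal I := by
    ext v
    simp only [hIperp, LinearMap.BilinForm.mem_orthogonal_iff, halt.isRefl.eq_iff]
  have h_isotropic : I ≤ a.orthogonal I := fun y hy x hx => hIiso x hx y hy
  have h_disjoint : Disjoint F (I.baseChange ℂ) := hF.disjoint_baseChange h_isotropic
  have h_disjoint' : Disjoint (F ⊓ (a.orthogonal I).baseChange ℂ) (I.baseChange ℂ) :=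
    h_disjoint.mono_left inf_le_left
  refine ⟨h_disjoint.eq_bot, ?_, h_disjoint'.eq_bot, ?_, Submodule.map_mono inf_le_right, ?_, ?_⟩
  · rw [Submodule.map_mkQ_eq_top, sup_comm]
    exact hF.sup_baseChange_orthogonal_eq_top hnd hdim h_isotropic
  · rw [finrank_map_mkQ_of_disjoint h_disjoint',
      hF.finrank_inf_baseChange_orthogonal hnd hdim h_isotropic, hI]
  · exact fun v hv w hw => hF.2.1 v hv.1 w hw.1
  · exact fun v hv hvI => hF.2.2 v hv.1 (ne_of_mem_of_not_mem (zero_mem _) hvI).symm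

end
end
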